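/- Let Q₁ be an N×N real matrix (N ≥ 2) with Q₁·u = 0 and Q₁ᵀ·u = 0 for the all-ones vector u (a balanced directed Laplacian), such that S := (Q₁ + Q₁ᵀ)/2 is positive semidefinite, and let p ≥ 0. Consider the multiplex in which the second layer is the direction-reversed copy of the first, Q₂ = Q₁ᵀ, with supra-Laplacian Q. Then: (i) the symmetric part of the similarity-transformed matrix Q̃ = [[(Q₁+Q₂)/2, (Q₂−Q₁)/2], [(Q₂−Q₁)/2, (Q₁+Q₂)/2 + 2p·I]] is the block-diagonal matrix diag(S, S + 2p·I); and (ii) the second smallest element of the multiset of real parts of the eigenvalues of Q satisfies Reλ₂(Q) ≥ min( λ₂(S), 2p ). In particular, for p ≥ λ₂(S)/2, the diffusion rate of the multiplex is at least that of the aggregated network S = (Q₁+Q₂)/2. -/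

import Mathlib

open Matrix

/-- The second smallest element of a multiset of real numbers
(the second entry of the multiset sorted in non-decreasing order). -/
noncomputable def secondSmallest (s : Multiset ℝ) : ℝ :=
  (s.sort (· ≤ ·)).getD 1 0

/-- The second smallest real part of the eigenvalues of a real square matrix, computed
from the complex roots (with multiplicity) of its characteristic polynomial. -/
noncomputable def reLambda2 {n : Type*} [Fintype n] [DecidableEq n]
    (M : Matrix n n ℝ) : ℝ :=
  secondSmallest (((M.map (Complex.ofReal ·)).charpoly.roots).map Complex.re)

/-- The second smallest real eigenvalue of a real square matrix (second smallest real
root of its characteristic polynomial, with multiplicity); for a real symmetric matrix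
this is its second smallest eigenvalue. -/
noncomputable def lambda2 {n : Type*} [Fintype n] [DecidableEq n]
    (M : Matrix n n ℝ) : ℝ :=
  (M.charpoly.roots.sort (· ≤ ·)).getD 1 0

/-!
Rotating each pair of replica nodes to sum and difference coordinates turns `Q` into the similar
matrix `Q̃`, whose symmetric part is `diag(S, S + 2p·I)` because `Q₁` and `Q₂` have the same
symmetric part `S`. The vector `(u, 0)` spans a kernel line of `Q̃`, and on its orthogonal
complement the quadratic form of `diag(S, S + 2p·I)` is at least `min (λ₂ S) (2p)`. Since `Q̃` need
not be normal, there is no variational principle for its spectrum; instead a rank one update moves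
the eigenvalue `0` of that line to `min (λ₂ S) (2p)` without touching the rest of the spectrum. The
updated matrix satisfies the bound on the whole space, hence so do the real parts of all its
eigenvalues (Bendixson).
-/

section SecondSmallest

theorem secondSmallest_cons_le {a b : ℝ} {R : Multiset ℝ} (ha : ∀ r ∈ R, a ≤ r) (hb : b ∈ R) :
    secondSmallest (a ::ₘ R) ≤ b := by
  have hsorted := R.pairwise_sort (· ≤ ·)
  rw [← Multiset.mem_sort (r := (· ≤ ·))] at hb
  rw [secondSmallest, Multiset.sort_cons _ _ _ ha, List.getD_cons_succ]
  cases hR : R.sort (· ≤ ·) with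
  | nil => simp [hR] at hb
  | cons r l =>
    rw [hR] at hb hsorted
    rcases List.mem_cons.1 hb with rfl | hbl
    · exact le_rfl
    · exact List.rel_of_pairwise_cons hsorted hbl

theorem le_secondSmallest_cons {a c : ℝ} {R : Multiset ℝ} (hR : R ≠ 0) (hc : ∀ r ∈ R, c ≤ r) :
    c ≤ secondSmallest (a ::ₘ R) := by
  have hcard : 0 < R.card := Multiset.card_pos.2 hR
  rcases le_total a c with hac | hca
  · rw [secondSmallest, Multiset.sort_cons _ _ _ fun r hr ↦ hac.trans (hc r hr),
      List.getD_cons_succ, List.getD_eq_getElem _ _ (by simpa using hcard)]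
    exact hc _ ((Multiset.mem_sort _).1 (List.getElem_mem _))
  · have hall : ∀ r ∈ a ::ₘ R, c ≤ r := Multiset.forall_mem_cons.2 ⟨hca, hc⟩
    rw [secondSmallest, List.getD_eq_getElem _ _ (by simpa using hcard)]
    exact hall _ ((Multiset.mem_sort _).1 (List.getElem_mem _))

end SecondSmallest

section RankOneUpdate

open Polynomial

variable {n : Type*} [Fintype n] [DecidableEq n]

theorem det_smul_one_sub_vecMulVec_mul {R : Type*} [CommRing R] (t : R) (x y : n → R) :
    (t • (1 : Matrix n n R) - vecMulVec x y).det * t = t ^ Fintype.card n * (t - x ⬝ᵥ y) := by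
  rw [smul_one_eq_diagonal, ← scalar_apply, ← eval_charpoly, charpoly_vecMulVec]
  cases isEmpty_or_nonempty n
  · simp
  · obtain ⟨k, hk⟩ := Nat.exists_eq_succ_of_ne_zero (Fintype.card_ne_zero (α := n))
    simp only [hk, eval_sub, eval_pow, eval_X, eval_smul, smul_eq_mul, Nat.succ_eq_add_one,
      Nat.add_sub_cancel]
    ring

theorem charpoly_add_vecMulVec_mul_of_mulVec_eq_smul {R : Type*} [CommRing R]
    {M : Matrix n n R} {w : n → R} {a : R} (h : M *ᵥ w = a • w) (v : n → R) :
    (M + vecMulVec w v).charpoly * (X - C a) = M.charpoly * (X - C (a + w ⬝ᵥ v)) := by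
  set B : Matrix n n R[X] := vecMulVec (C ∘ w) (C ∘ v) with hB
  have hMB : M.charmatrix * B = (X - C a) • B := by
    have hw : M.charmatrix *ᵥ (C ∘ w) = (X - C a) • (C ∘ w) := by
      have hMw : M.map C *ᵥ (C ∘ w) = C a • (C ∘ w) := by
        ext1 i
        rw [← RingHom.map_mulVec, h]
        simp
      rw [charmatrix, sub_mulVec, scalar_apply, ← smul_one_eq_diagonal, smul_mulVec, one_mulVec,
        RingHom.mapMatrix_apply, hMw, sub_smul]
    rw [hB, mul_vecMulVec, hw, smul_vecMulVec]
  have hcharmatrix : (M + vecMulVec w v).charmatrix = M.charmatrix - B := by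
    have hmap : C.mapMatrix (vecMulVec w v) = B := by
      ext1 i j
      simp [hB, vecMulVec_apply]
    rw [charmatrix, charmatrix, map_add, hmap, sub_add_eq_sub_sub]
  have hprod : (X - C a) ^ Fintype.card n * (M + vecMulVec w v).charpoly =
      M.charpoly * ((X - C a) • (1 : Matrix n n R[X]) - B).det := by
    rw [charpoly, charpoly, ← det_smul, hcharmatrix, ← det_mul, mul_sub, hMB, Matrix.mul_smul,
      mul_one, smul_sub]
  have hwv : (C ∘ w : n → R[X]) ⬝ᵥ (C ∘ v) = C (w ⬝ᵥ v) := (RingHom.map_dotProduct C w v).symm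
  refine ((monic_X_sub_C a).pow (Fintype.card n)).isRegular.left ?_
  calc (X - C a) ^ Fintype.card n * ((M + vecMulVec w v).charpoly * (X - C a))
      = M.charpoly * (((X - C a) • (1 : Matrix n n R[X]) - B).det * (X - C a)) := by
        rw [← mul_assoc, hprod, mul_assoc]
    _ = (X - C a) ^ Fintype.card n * (M.charpoly * (X - C (a + w ⬝ᵥ v))) := by
        rw [det_smul_one_sub_vecMulVec_mul, hwv, C_add]
        ring

end RankOneUpdate

section Deflation

variable {n K : Type*} [Fintype n] [Field K] {M : Matrix n n K} {w : n → K} {a : K}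

/-- Deflation of `M` along `w`: for `w ⬝ᵥ w ≠ 0` and `P` the orthogonal projection onto the line
of `w`, this is `c P + (1 - P) M`, written as a rank one update of `M`. When `w` is an eigenvector
of `M`, it replaces the corresponding eigenvalue by `c`. -/
def deflation (M : Matrix n n K) (w : n → K) (c : K) : Matrix n n K :=
  M + vecMulVec w ((w ⬝ᵥ w)⁻¹ • (c • w - w ᵥ* M))

theorem dotProduct_deflation_mulVec (h : M *ᵥ w = a • w) (hw : w ⬝ᵥ w ≠ 0) (c r : K) {y : n → K}
    (hy : w ⬝ᵥ y = 0) :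
    (r • w + y) ⬝ᵥ (deflation M w c *ᵥ (r • w + y)) =
      c * ((r • w) ⬝ᵥ (r • w)) + y ⬝ᵥ (M *ᵥ y) := by
  simp only [deflation, add_mulVec, vecMulVec_mulVec, op_smul_eq_smul, smul_dotProduct,
    sub_dotProduct, ← dotProduct_mulVec, mulVec_add, mulVec_smul, h, dotProduct_add,
    add_dotProduct, dotProduct_smul, smul_eq_mul, hy, dotProduct_comm y w]
  field_simp
  ring

open Polynomial in
theorem exists_charpoly_eq_mul_and_charpoly_deflation_eq_mul [DecidableEq n]
    (h : M *ᵥ w = a • w) (hw : w ⬝ᵥ w ≠ 0) (c : K) :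
    ∃ P : K[X], M.charpoly = (X - C a) * P ∧ (deflation M w c).charpoly = (X - C c) * P := by
  have hdvd : X - C a ∣ M.charpoly := by
    rw [dvd_iff_isRoot, IsRoot, eval_charpoly, ← exists_mulVec_eq_zero_iff]
    refine ⟨w, fun h0 ↦ hw (by simp [h0]), ?_⟩
    rw [sub_mulVec, scalar_apply, ← smul_one_eq_diagonal, smul_mulVec, one_mulVec, h, sub_self]
  obtain ⟨P, hP⟩ := hdvd
  refine ⟨P, hP, mul_right_cancel₀ (X_sub_C_ne_zero a) ?_⟩
  have hc : a + w ⬝ᵥ ((w ⬝ᵥ w)⁻¹ • (c • w - w ᵥ* M)) = c := by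
    rw [dotProduct_smul, dotProduct_sub, dotProduct_smul, dotProduct_comm w (w ᵥ* M),
      ← dotProduct_mulVec, h, dotProduct_smul, smul_eq_mul, smul_eq_mul, smul_eq_mul]
    field_simp
    ring
  rw [deflation, charpoly_add_vecMulVec_mul_of_mulVec_eq_smul h, hc, hP]
  ring

end Deflation

section QuadraticForm

variable {n : Type*} [Fintype n] {M S : Matrix n n ℝ} {w : n → ℝ} {a c : ℝ}

theorem mul_dotProduct_self_le_deflation (h : M *ᵥ w = a • w) (hw : w ≠ 0)
    (hc : ∀ x, w ⬝ᵥ x = 0 → c * (x ⬝ᵥ x) ≤ x ⬝ᵥ (M *ᵥ x)) (x : n → ℝ) :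
    c * (x ⬝ᵥ x) ≤ x ⬝ᵥ (deflation M w c *ᵥ x) := by
  have hww : w ⬝ᵥ w ≠ 0 := mt dotProduct_self_eq_zero.1 hw
  obtain ⟨r, y, hy, rfl⟩ : ∃ r y, w ⬝ᵥ y = 0 ∧ x = r • w + y := by
    refine ⟨w ⬝ᵥ x / (w ⬝ᵥ w), x - (w ⬝ᵥ x / (w ⬝ᵥ w)) • w, ?_, by simp⟩
    rw [dotProduct_sub, dotProduct_smul, smul_eq_mul, div_mul_cancel₀ _ hww, sub_self]
  have hxx : (r • w + y) ⬝ᵥ (r • w + y) = (r • w) ⬝ᵥ (r • w) + y ⬝ᵥ y := by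
    simp [add_dotProduct, dotProduct_add, dotProduct_comm y w, hy]
  rw [dotProduct_deflation_mulVec h hww c r hy, hxx, mul_add]
  gcongr
  exact hc y hy

theorem isHermitian_deflation (hS : S.IsHermitian) (h : S *ᵥ w = a • w) (c : ℝ) :
    (deflation S w c).IsHermitian := by
  have hSt : Sᵀ = S := hS
  have hwS : w ᵥ* S = a • w := by rw [← mulVec_transpose, hSt, h]
  rw [IsHermitian, conjTranspose_eq_transpose_of_trivial, deflation, transpose_add, hSt,
    transpose_vecMulVec, hwS, ← sub_smul, smul_smul, smul_vecMulVec, vecMulVec_smul]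

variable [DecidableEq n]

open scoped MatrixOrder in
theorem mul_dotProduct_self_le_of_le_roots_charpoly (hS : S.IsHermitian)
    (hc : ∀ r ∈ S.charpoly.roots, c ≤ r) (x : n → ℝ) : c * (x ⬝ᵥ x) ≤ x ⬝ᵥ (S *ᵥ x) := by
  have hle : algebraMap ℝ (Matrix n n ℝ) c ≤ S := by
    refine (algebraMap_le_iff_le_spectrum hS).2 fun r hr ↦ hc r ?_
    exact (Polynomial.mem_roots S.charpoly_monic.ne_zero).2 (mem_spectrum_iff_isRoot_charpoly.1 hr)
  have hpos := (Matrix.le_iff.1 hle).dotProduct_mulVec_nonneg x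
  rw [Algebra.algebraMap_eq_smul_one, sub_mulVec, smul_mulVec, one_mulVec, star_trivial,
    dotProduct_sub, dotProduct_smul, smul_eq_mul] at hpos
  exact sub_nonneg.1 hpos

theorem lambda2_mul_dotProduct_self_le (hS : S.IsHermitian) (h : S *ᵥ w = a • w) (hw : w ≠ 0)
    (ha : ∀ r ∈ S.charpoly.roots, a ≤ r) {x : n → ℝ} (hx : w ⬝ᵥ x = 0) :
    lambda2 S * (x ⬝ᵥ x) ≤ x ⬝ᵥ (S *ᵥ x) := by
  have hww : w ⬝ᵥ w ≠ 0 := mt dotProduct_self_eq_zero.1 hw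
  obtain ⟨P, hP, hPdefl⟩ :=
    exists_charpoly_eq_mul_and_charpoly_deflation_eq_mul h hww (lambda2 S)
  have hroots : S.charpoly.roots = a ::ₘ P.roots := by
    rw [hP, Polynomial.roots_mul (hP ▸ S.charpoly_monic.ne_zero), Polynomial.roots_X_sub_C,
      Multiset.singleton_add]
  have hlambda2 : lambda2 S = secondSmallest (a ::ₘ P.roots) := by rw [← hroots]; rfl
  have hdeflation : x ⬝ᵥ (deflation S w (lambda2 S) *ᵥ x) = x ⬝ᵥ (S *ᵥ x) := by
    simpa using dotProduct_deflation_mulVec h hww (lambda2 S) 0 hx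
  rw [← hdeflation]
  refine mul_dotProduct_self_le_of_le_roots_charpoly (isHermitian_deflation hS h _) ?_ x
  intro r hr
  rw [hPdefl, Polynomial.roots_mul (hPdefl ▸ (charpoly_monic _).ne_zero),
    Polynomial.roots_X_sub_C, Multiset.singleton_add, Multiset.mem_cons] at hr
  rcases hr with rfl | hr
  · exact le_rfl
  · rw [hlambda2]
    exact secondSmallest_cons_le
      (fun s hs ↦ ha s (hroots ▸ Multiset.mem_cons_of_mem hs)) hr

end QuadraticForm

section RealParts

variable {n : Type*} [Fintype n] {M : Matrix n n ℝ} {c : ℝ}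

theorem re_mul_dotProduct_re_add_dotProduct_im {v : n → ℂ} {z : ℂ}
    (h : M.map Complex.ofReal *ᵥ v = z • v) :
    z.re * ((Complex.re ∘ v) ⬝ᵥ (Complex.re ∘ v) + (Complex.im ∘ v) ⬝ᵥ (Complex.im ∘ v)) =
      (Complex.re ∘ v) ⬝ᵥ (M *ᵥ (Complex.re ∘ v)) +
        (Complex.im ∘ v) ⬝ᵥ (M *ᵥ (Complex.im ∘ v)) := by
  have hre : M *ᵥ (Complex.re ∘ v) = z.re • (Complex.re ∘ v) - z.im • (Complex.im ∘ v) := by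
    ext i
    simpa [mulVec, dotProduct] using congrArg Complex.re (congrFun h i)
  have him : M *ᵥ (Complex.im ∘ v) = z.re • (Complex.im ∘ v) + z.im • (Complex.re ∘ v) := by
    ext i
    simpa [mulVec, dotProduct] using congrArg Complex.im (congrFun h i)
  rw [hre, him]
  simp only [dotProduct_sub, dotProduct_add, dotProduct_smul, smul_eq_mul,
    dotProduct_comm (Complex.im ∘ v) (Complex.re ∘ v)]
  ring

variable [DecidableEq n]

theorem le_re_of_mem_roots_charpoly (hc : ∀ x, c * (x ⬝ᵥ x) ≤ x ⬝ᵥ (M *ᵥ x)) {z : ℂ}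
    (hz : z ∈ (M.map Complex.ofReal).charpoly.roots) : c ≤ z.re := by
  have hroot := Polynomial.isRoot_of_mem_roots hz
  rw [Polynomial.IsRoot, eval_charpoly, ← exists_mulVec_eq_zero_iff] at hroot
  obtain ⟨v, hv, hMv⟩ := hroot
  rw [sub_mulVec, scalar_apply, ← smul_one_eq_diagonal, smul_mulVec, one_mulVec, sub_eq_zero,
    eq_comm] at hMv
  have hpos : 0 < (Complex.re ∘ v) ⬝ᵥ (Complex.re ∘ v) + (Complex.im ∘ v) ⬝ᵥ (Complex.im ∘ v) := by
    obtain ⟨i, hi⟩ := Function.ne_iff.1 hv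
    rw [dotProduct, dotProduct, ← Finset.sum_add_distrib]
    exact Finset.sum_pos' (fun j _ ↦ Complex.normSq_nonneg (v j))
      ⟨i, Finset.mem_univ i, Complex.normSq_pos.2 hi⟩
  refine le_of_mul_le_mul_right ?_ hpos
  rw [re_mul_dotProduct_re_add_dotProduct_im hMv, mul_add]
  exact add_le_add (hc _) (hc _)

theorem le_reLambda2_of_forall_orthogonal [Nontrivial n] {w : n → ℝ} {a : ℝ}
    (h : M *ᵥ w = a • w) (hw : w ≠ 0)
    (hc : ∀ x, w ⬝ᵥ x = 0 → c * (x ⬝ᵥ x) ≤ x ⬝ᵥ (M *ᵥ x)) : c ≤ reLambda2 M := by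
  obtain ⟨P, hP, hPdefl⟩ := exists_charpoly_eq_mul_and_charpoly_deflation_eq_mul h
    (mt dotProduct_self_eq_zero.1 hw) c
  have hroots {A : Matrix n n ℝ} {b : ℝ} (hA : A.charpoly = (Polynomial.X - Polynomial.C b) * P) :
      (A.map Complex.ofReal).charpoly.roots = (b : ℂ) ::ₘ (P.map Complex.ofRealHom).roots := by
    have hmap : (A.map Complex.ofReal).charpoly =
        (Polynomial.X - Polynomial.C (b : ℂ)) * P.map Complex.ofRealHom :=
      (charpoly_map A Complex.ofRealHom).trans (by simp [hA])
    rw [hmap, Polynomial.roots_mul (hmap ▸ (charpoly_monic _).ne_zero), Polynomial.roots_X_sub_C,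
      Multiset.singleton_add]
  have hne : (P.map Complex.ofRealHom).roots ≠ 0 := by
    intro hzero
    have hcard := IsAlgClosed.card_roots_eq_natDegree (p := (M.map Complex.ofReal).charpoly)
    rw [hroots hP, hzero, charpoly_natDegree_eq_dim] at hcard
    exact Fintype.one_lt_card.ne hcard
  rw [reLambda2, hroots hP, Multiset.map_cons]
  refine le_secondSmallest_cons (by simpa using hne) ?_
  simp only [Multiset.mem_map, forall_exists_index, and_imp, forall_apply_eq_imp_iff₂]
  intro z hz
  refine le_re_of_mem_roots_charpoly (mul_dotProduct_self_le_deflation h hw hc) ?_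
  rw [hroots hPdefl]
  exact Multiset.mem_cons_of_mem hz

theorem reLambda2_congr {M' : Matrix n n ℝ} (h : M.charpoly = M'.charpoly) :
    reLambda2 M = reLambda2 M' := by
  have hmap : (M.map Complex.ofReal).charpoly = (M'.map Complex.ofReal).charpoly :=
    (charpoly_map M Complex.ofRealHom).trans (h ▸ (charpoly_map M' Complex.ofRealHom).symm)
  rw [reLambda2, reLambda2, hmap]

end RealParts

section Multiplex

variable {n : Type*}

/-- The symmetric part of a real square matrix. -/
noncomputable def symmPart (M : Matrix n n ℝ) : Matrix n n ℝ :=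
  (1 / 2 : ℝ) • (M + Mᵀ)

theorem symmPart_transpose (M : Matrix n n ℝ) : symmPart Mᵀ = symmPart M := by
  rw [symmPart, symmPart, transpose_transpose, add_comm]

theorem dotProduct_symmPart_mulVec [Fintype n] (M : Matrix n n ℝ) (x : n → ℝ) :
    x ⬝ᵥ (symmPart M *ᵥ x) = x ⬝ᵥ (M *ᵥ x) := by
  have htranspose : x ⬝ᵥ (Mᵀ *ᵥ x) = x ⬝ᵥ (M *ᵥ x) := by
    rw [mulVec_transpose, dotProduct_comm, ← dotProduct_mulVec]
  rw [symmPart, smul_mulVec, add_mulVec, dotProduct_smul, dotProduct_add, htranspose, smul_eq_mul]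
  ring

variable [DecidableEq n]

/-- The supra-Laplacian `Q` of the two-layer multiplex with layers `Q₁`, `Q₂` and coupling `p`. -/
def supraLaplacian (Q₁ Q₂ : Matrix n n ℝ) (p : ℝ) : Matrix (n ⊕ n) (n ⊕ n) ℝ :=
  fromBlocks (Q₁ + p • 1) (-(p • 1)) (-(p • 1)) (Q₂ + p • 1)

/-- The matrix `Q̃` representing the supra-Laplacian in the sum and difference coordinates of the
two layers, the difference being that of the second layer minus the first. -/
noncomputable def rotatedSupraLaplacian (Q₁ Q₂ : Matrix n n ℝ) (p : ℝ) :
    Matrix (n ⊕ n) (n ⊕ n) ℝ :=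
  fromBlocks ((1 / 2 : ℝ) • (Q₁ + Q₂)) ((1 / 2 : ℝ) • (Q₂ - Q₁))
    ((1 / 2 : ℝ) • (Q₂ - Q₁)) ((1 / 2 : ℝ) • (Q₁ + Q₂) + (2 * p) • 1)

theorem symmPart_rotatedSupraLaplacian (Q₁ Q₂ : Matrix n n ℝ) (p : ℝ) :
    symmPart (rotatedSupraLaplacian Q₁ Q₂ p) =
      rotatedSupraLaplacian (symmPart Q₁) (symmPart Q₂) p := by
  simp only [symmPart, rotatedSupraLaplacian, fromBlocks_transpose, fromBlocks_add,
    fromBlocks_smul, transpose_add, transpose_sub, transpose_smul, transpose_one]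
  congr 1 <;> module

theorem rotatedSupraLaplacian_self (S : Matrix n n ℝ) (p : ℝ) :
    rotatedSupraLaplacian S S p = fromBlocks S 0 0 (S + (2 * p) • 1) := by
  rw [rotatedSupraLaplacian, sub_self, smul_zero]
  congr 1 <;> module

variable [Fintype n] {Q₁ Q₂ S : Matrix n n ℝ} {u : n → ℝ}

theorem charpoly_rotatedSupraLaplacian (Q₁ Q₂ : Matrix n n ℝ) (p : ℝ) :
    (rotatedSupraLaplacian Q₁ Q₂ p).charpoly = (supraLaplacian Q₁ Q₂ p).charpoly := by
  let T : Matrix (n ⊕ n) (n ⊕ n) ℝ := fromBlocks 1 (-1) 1 1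
  let Tinv : Matrix (n ⊕ n) (n ⊕ n) ℝ := (1 / 2 : ℝ) • fromBlocks 1 1 (-1) 1
  have hT : T * Tinv = 1 := by
    simp only [T, Tinv, Matrix.mul_smul, fromBlocks_multiply, fromBlocks_smul, ← fromBlocks_one,
      Matrix.one_mul, Matrix.neg_mul]
    congr 1 <;> module
  have hconj : rotatedSupraLaplacian Q₁ Q₂ p = Tinv * (supraLaplacian Q₁ Q₂ p * T) := by
    simp only [T, Tinv, rotatedSupraLaplacian, supraLaplacian, smul_mul, fromBlocks_multiply,
      fromBlocks_smul, Matrix.one_mul, Matrix.mul_one, Matrix.neg_mul, Matrix.mul_neg]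
    congr 1 <;> module
  rw [hconj, charpoly_mul_comm, mul_assoc, hT, mul_one]

theorem rotatedSupraLaplacian_mulVec_elim_zero (h₁ : Q₁ *ᵥ u = 0) (h₂ : Q₂ *ᵥ u = 0) (p : ℝ) :
    rotatedSupraLaplacian Q₁ Q₂ p *ᵥ Sum.elim u 0 = 0 := by
  simp [rotatedSupraLaplacian, fromBlocks_mulVec, smul_mulVec, add_mulVec, sub_mulVec, h₁, h₂]

theorem min_mul_dotProduct_self_le_fromBlocks (hS : S.PosSemidef) (hu : u ≠ 0) (hSu : S *ᵥ u = 0)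
    (p : ℝ) {x : n ⊕ n → ℝ} (hx : Sum.elim u 0 ⬝ᵥ x = 0) :
    min (lambda2 S) (2 * p) * (x ⬝ᵥ x) ≤
      x ⬝ᵥ (fromBlocks S 0 0 (S + (2 * p) • 1) *ᵥ x) := by
  obtain ⟨y, z, rfl⟩ : ∃ y z, x = Sum.elim y z := ⟨x ∘ Sum.inl, x ∘ Sum.inr, by simp⟩
  have hy : u ⬝ᵥ y = 0 := by simpa [sumElim_dotProduct_sumElim] using hx
  have hroots : ∀ r ∈ S.charpoly.roots, 0 ≤ r := by
    intro r hr
    rw [hS.1.roots_charpoly_eq_eigenvalues] at hr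
    obtain ⟨i, -, rfl⟩ := Multiset.mem_map.1 hr
    exact hS.eigenvalues_nonneg i
  have hyS : lambda2 S * (y ⬝ᵥ y) ≤ y ⬝ᵥ (S *ᵥ y) :=
    lambda2_mul_dotProduct_self_le hS.1 (by rw [hSu, zero_smul]) hu hroots hy
  have hzS : 0 ≤ z ⬝ᵥ (S *ᵥ z) := hS.dotProduct_mulVec_nonneg z
  have hyy : 0 ≤ y ⬝ᵥ y := dotProduct_star_self_nonneg y
  have hzz : 0 ≤ z ⬝ᵥ z := dotProduct_star_self_nonneg z
  calc min (lambda2 S) (2 * p) * (Sum.elim y z ⬝ᵥ Sum.elim y z)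
      = min (lambda2 S) (2 * p) * (y ⬝ᵥ y) + min (lambda2 S) (2 * p) * (z ⬝ᵥ z) := by
        rw [sumElim_dotProduct_sumElim, mul_add]
    _ ≤ lambda2 S * (y ⬝ᵥ y) + 2 * p * (z ⬝ᵥ z) := by
        gcongr
        exacts [min_le_left _ _, min_le_right _ _]
    _ ≤ y ⬝ᵥ (S *ᵥ y) + (z ⬝ᵥ (S *ᵥ z) + 2 * p * (z ⬝ᵥ z)) := by linarith
    _ = Sum.elim y z ⬝ᵥ (fromBlocks S 0 0 (S + (2 * p) • 1) *ᵥ Sum.elim y z) := by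
        simp [fromBlocks_mulVec, sumElim_dotProduct_sumElim, add_mulVec, smul_mulVec]

theorem reversed_layer_multiplex_diffusion_bound_general [Nontrivial n]
    (hS₁ : symmPart Q₁ = S) (hS₂ : symmPart Q₂ = S) (hS : S.PosSemidef)
    (hu : u ≠ 0) (h₁ : Q₁ *ᵥ u = 0) (h₂ : Q₂ *ᵥ u = 0) (p : ℝ) :
    symmPart (rotatedSupraLaplacian Q₁ Q₂ p) = fromBlocks S 0 0 (S + (2 * p) • 1) ∧
      min (lambda2 S) (2 * p) ≤ reLambda2 (supraLaplacian Q₁ Q₂ p) ∧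
      (lambda2 S / 2 ≤ p → lambda2 S ≤ reLambda2 (supraLaplacian Q₁ Q₂ p)) := by
  have hsymm : symmPart (rotatedSupraLaplacian Q₁ Q₂ p) =
      fromBlocks S 0 0 (S + (2 * p) • 1) := by
    rw [symmPart_rotatedSupraLaplacian, hS₁, hS₂, rotatedSupraLaplacian_self]
  have hSu : S *ᵥ u = 0 := by
    rw [← hS.dotProduct_mulVec_zero_iff, star_trivial, ← hS₁, dotProduct_symmPart_mulVec, h₁,
      dotProduct_zero]
  have : Nontrivial (n ⊕ n) := Sum.inl_injective.nontrivial
  have hw : Sum.elim u (0 : n → ℝ) ≠ 0 := fun h ↦ hu (congrArg (· ∘ Sum.inl) h)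
  have hbound : min (lambda2 S) (2 * p) ≤ reLambda2 (supraLaplacian Q₁ Q₂ p) := by
    rw [← reLambda2_congr (charpoly_rotatedSupraLaplacian Q₁ Q₂ p)]
    refine le_reLambda2_of_forall_orthogonal (a := 0) ?_ hw fun x hx ↦ ?_
    · rw [rotatedSupraLaplacian_mulVec_elim_zero h₁ h₂, zero_smul]
    · rw [← dotProduct_symmPart_mulVec, hsymm]
      exact min_mul_dotProduct_self_le_fromBlocks hS hu hSu p hx
  exact ⟨hsymm, hbound, fun hp ↦ by rwa [min_eq_left (by linarith)] at hbound⟩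

end Multiplex

/-- Coupling a balanced directed layer `Q₁` with its direction-reversed copy `Q₂ = Q₁ᵀ`:
(i) the symmetric part of the similarity-transformed supra-Laplacian `Q̃` is the
block-diagonal matrix `diag(S, S + 2p·I)` with `S = (Q₁+Q₁ᵀ)/2`, and
(ii) `Reλ₂(Q) ≥ min(λ₂(S), 2p)`; in particular for `p ≥ λ₂(S)/2` the diffusion rate of
the multiplex is at least that of the aggregated network `S`. -/
theorem reversed_layer_multiplex_diffusion_bound
    (N : ℕ) (hN : 2 ≤ N) (Q1 : Matrix (Fin N) (Fin N) ℝ)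
    (u : Fin N → ℝ) (hu : u = fun _ => (1 : ℝ))
    (h1 : Q1.mulVec u = 0) (h2 : Q1ᵀ.mulVec u = 0)
    (S : Matrix (Fin N) (Fin N) ℝ) (hS : S = (1 / 2 : ℝ) • (Q1 + Q1ᵀ))
    (hpsd : S.PosSemidef) (p : ℝ) (hp : 0 ≤ p) :
    (1 / 2 : ℝ) •
        (Matrix.fromBlocks ((1 / 2 : ℝ) • (Q1 + Q1ᵀ)) ((1 / 2 : ℝ) • (Q1ᵀ - Q1))
            ((1 / 2 : ℝ) • (Q1ᵀ - Q1)) ((1 / 2 : ℝ) • (Q1 + Q1ᵀ) + (2 * p) • 1) +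
          (Matrix.fromBlocks ((1 / 2 : ℝ) • (Q1 + Q1ᵀ)) ((1 / 2 : ℝ) • (Q1ᵀ - Q1))
            ((1 / 2 : ℝ) • (Q1ᵀ - Q1)) ((1 / 2 : ℝ) • (Q1 + Q1ᵀ) + (2 * p) • 1))ᵀ) =
        Matrix.fromBlocks S 0 0 (S + (2 * p) • 1) ∧
    reLambda2 (Matrix.fromBlocks (Q1 + p • 1) (-(p • 1)) (-(p • 1)) (Q1ᵀ + p • 1)) ≥
        min (lambda2 S) (2 * p) ∧
    (p ≥ lambda2 S / 2 →
      reLambda2 (Matrix.fromBlocks (Q1 + p • 1) (-(p • 1)) (-(p • 1)) (Q1ᵀ + p • 1)) ≥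
        lambda2 S) := by
  have : Nontrivial (Fin N) := Fin.nontrivial_iff_two_le.2 hN
  subst hu hS
  exact reversed_layer_multiplex_diffusion_bound_general rfl (symmPart_transpose Q1) hpsd
    one_ne_zero h1 h2 p
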